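/- Let p > n ≥ 2 and R > 0, and let B_R := {x ∈ ℝⁿ : |x| < R} with d(x) := R − |x|. There exist constants Θ = Θ(n,p) ≥ 0 and C = C(n,p) > 0 such that for every u ∈ C_c^∞(B_R) and every D ≥ e^Θ R, one has sup_{x ∈ B_R} { |u(x)| · (d(x))^{n/p − 1} · X^{1/p}(d(x)/D) } ≤ C · ( ∫_{B_R} |∇u|^p dx − ((p−1)/p)^p ∫_{B_R} |u|^p / d^p dx )^{1/p}. -/

import Mathlib

/-!
Along a ray, put `T = ((p - 1) / p) ^ (p - 1) * (1 - φ) * d ^ (1 - p)` with `d = R - r`. By Young's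
inequality the Hardy deficit bounds the boundary values of the flux `T |u| ^ p r ^ (n - 1)`, as
soon as `T` satisfies a Riccati inequality, which for small `φ ≥ 0` reads
`d φ' + p φ ^ 2 / 2 ≤ 0`. The choice `φ = X(d / D) / p` is admissible, and on an annulus where `d`
varies by a bounded factor the choice `φ = ε log (d / d₀)` is admissible with room to spare of
order `ε`. Jumping from the first choice to the second and then to `φ = 0`, with `ε` of the size of
`X`, shows that the deficit controls `X` times the full energy `∫ |∇u| ^ p + |u| ^ p / d ^ p` of the
annulus. Around a point `x` these quantities are then compared with `u x` by Morrey's inequality on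
the ball of radius `d x / 2`, on which `d` is comparable to `d x`.
-/

open MeasureTheory Metric Set

/-- The logarithmic weight `X(t) = (1 - log t)⁻¹`, meaningful for `t ∈ (0, 1]`. -/
noncomputable def logWeight (t : ℝ) : ℝ := (1 - Real.log t)⁻¹

/-- The integrand of the Hardy functional with constant `c`, at a point at distance `d` from the
boundary where the function has value `v` and its gradient has norm `w`. The value `c = ((p-1)/p)^p`
gives the Hardy deficit; negative `c` gives an energy density. -/
noncomputable def hardyDensity (p c d v w : ℝ) : ℝ := w ^ p - c * (|v| ^ p / d ^ p)

/-- The coefficient `T` of the vector field whose divergence yields the Hardy inequality at distance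
`d` from the boundary. The perturbation `φ = 0` gives the plain inequality, and a positive `φ`
leaves a remainder. -/
noncomputable def hardyField (p φ d : ℝ) : ℝ := ((p - 1) / p) ^ (p - 1) * (1 - φ) * d ^ (1 - p)

section LogWeight

variable {s t : ℝ}

lemma logWeight_mem_Ioc (ht₀ : 0 ≤ t) (ht₁ : t ≤ 1) : logWeight t ∈ Ioc 0 1 := by
  have hlog : Real.log t ≤ 0 := Real.log_nonpos ht₀ ht₁
  exact ⟨inv_pos.2 (by linarith), inv_le_one_of_one_le₀ (by linarith)⟩

lemma logWeight_sub_div_mem_Ioc {R r D : ℝ} (hr₀ : 0 ≤ r) (hrR : r ≤ R) (hD : R ≤ D) :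
    logWeight ((R - r) / D) ∈ Ioc 0 1 :=
  logWeight_mem_Ioc (div_nonneg (by linarith) (by linarith))
    (div_le_one_of_le₀ (by linarith) (by linarith))

lemma logWeight_le_logWeight (hs : 0 < s) (hst : s ≤ t) (ht : t ≤ 1) :
    logWeight s ≤ logWeight t := by
  have hlog : Real.log t ≤ 0 := Real.log_nonpos (hs.le.trans hst) ht
  exact inv_anti₀ (by linarith) (sub_le_sub_left (Real.log_le_log hs hst) 1)

lemma hasDerivAt_logWeight (ht₀ : 0 < t) (ht₁ : t ≤ 1) :
    HasDerivAt logWeight (logWeight t ^ 2 / t) t := by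
  have hlog : 1 - Real.log t ≠ 0 := by linarith [Real.log_nonpos ht₀.le ht₁]
  refine (((Real.hasDerivAt_log ht₀.ne').const_sub 1).fun_inv hlog).congr_deriv ?_
  rw [logWeight]
  field_simp

lemma hasDerivAt_logWeight_sub_div {R r D : ℝ} (hr₀ : 0 ≤ r) (hrR : r < R) (hD : R ≤ D) :
    HasDerivAt (fun r ↦ logWeight ((R - r) / D)) (-(logWeight ((R - r) / D) ^ 2 / (R - r))) r := by
  have hd : 0 < R - r := sub_pos.2 hrR
  have hD₀ : 0 < D := by linarith
  refine ((hasDerivAt_logWeight (div_pos hd hD₀) (div_le_one_of_le₀ (by linarith) hD₀.le)).comp r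
    (((hasDerivAt_id' r).const_sub R).div_const D)).congr_deriv ?_
  field_simp

lemma log_div_mem_Icc (hs : 0 < s) (hst : s ≤ t) (ht : t ≤ 3 * s) :
    Real.log (t / s) ∈ Icc 0 2 := by
  have hratio : t / s ≤ 3 := (div_le_iff₀ hs).2 ht
  exact ⟨Real.log_nonneg ((one_le_div hs).2 hst),
    by linarith [Real.log_le_sub_one_of_pos (div_pos (hs.trans_le hst) hs)]⟩

lemma hasDerivAt_log_sub_div {R r k : ℝ} (hrR : r < R) (hk : k ≠ 0) :
    HasDerivAt (fun r ↦ Real.log ((R - r) / k)) (-(R - r)⁻¹) r := by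
  have hd : R - r ≠ 0 := (sub_pos.2 hrR).ne'
  refine ((((hasDerivAt_id' r).const_sub R).div_const k).log (div_ne_zero hd hk)).congr_deriv ?_
  field_simp

end LogWeight

section Pointwise

variable {p φ φ' d : ℝ}

lemma sub_one_div_rpow_pos (hp : 1 < p) (q : ℝ) : 0 < ((p - 1) / p) ^ q :=
  Real.rpow_pos_of_pos (div_pos (by linarith) (by linarith)) q

lemma one_sub_rpow_le_quadratic {q : ℝ} (hq : 0 ≤ q) (hφ : φ ∈ Icc 0 1) :
    (1 - φ) ^ q ≤ 1 - q * φ + (q * φ) ^ 2 / 2 := by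
  have hx : 0 ≤ q * φ := mul_nonneg hq hφ.1
  calc (1 - φ) ^ q ≤ Real.exp (-φ) ^ q :=
        Real.rpow_le_rpow (sub_nonneg.2 hφ.2) (Real.one_sub_le_exp_neg φ) hq
    _ = (Real.exp (q * φ))⁻¹ := by rw [← Real.exp_mul, ← Real.exp_neg]; ring_nf
    _ ≤ (1 + q * φ + (q * φ) ^ 2 / 2)⁻¹ :=
        inv_anti₀ (by positivity) (Real.quadratic_le_exp_of_nonneg hx)
    _ ≤ 1 - q * φ + (q * φ) ^ 2 / 2 := by
        rw [inv_le_iff_one_le_mul₀ (by positivity)]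
        nlinarith [sq_nonneg ((q * φ) ^ 2)]

lemma neg_mul_deriv_abs_rpow_le (hp : 1 < p) {T : ℝ} (hT : 0 ≤ T) (v w : ℝ) :
    -(T * (p * |v| ^ (p - 2) * v * w)) ≤ |w| ^ p + (p - 1) * T ^ (p / (p - 1)) * |v| ^ p := by
  have hp₁ : 0 < p - 1 := by linarith
  have hconj : p.HolderConjugate (p / (p - 1)) :=
    (Real.holderConjugate_iff_eq_conjExponent hp).2 rfl
  have hyoung := Real.young_inequality_of_nonneg (abs_nonneg w)
    (mul_nonneg hT (Real.rpow_nonneg (abs_nonneg v) (p - 1))) hconj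
  have hpow : |v| ^ (p - 1) = |v| ^ (p - 2) * |v| := by
    rcases eq_or_ne v 0 with rfl | hv
    · simp [Real.zero_rpow hp₁.ne']
    · rw [show p - 1 = (p - 2) + 1 by ring, Real.rpow_add_one (abs_ne_zero.2 hv)]
  have hconj_pow : (T * |v| ^ (p - 1)) ^ (p / (p - 1)) = T ^ (p / (p - 1)) * |v| ^ p := by
    rw [Real.mul_rpow hT (by positivity), ← Real.rpow_mul (abs_nonneg v),
      mul_div_cancel₀ _ hp₁.ne']
  calc -(T * (p * |v| ^ (p - 2) * v * w)) = T * p * |v| ^ (p - 2) * -(v * w) := by ring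
    _ ≤ T * p * |v| ^ (p - 2) * (|v| * |w|) := by
        gcongr
        rw [← abs_mul]
        exact neg_le_abs _
    _ = p * (|w| * (T * |v| ^ (p - 1))) := by rw [hpow]; ring
    _ ≤ p * (|w| ^ p / p + T ^ (p / (p - 1)) * |v| ^ p / (p / (p - 1))) := by
        rw [← hconj_pow]; gcongr
    _ = |w| ^ p + (p - 1) * T ^ (p / (p - 1)) * |v| ^ p := by field_simp

lemma hardyField_nonneg (hp : 1 < p) (hφ : φ ≤ 1) (hd : 0 ≤ d) : 0 ≤ hardyField p φ d := by
  have : 0 ≤ p - 1 := by linarith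
  have : 0 ≤ 1 - φ := by linarith
  rw [hardyField]
  positivity

lemma hardyField_mul_nonneg (hp : 1 < p) (hφ : φ ≤ 1) (hd : 0 ≤ d) (m : ℕ) (v : ℝ) {r : ℝ}
    (hr : 0 ≤ r) : 0 ≤ hardyField p φ d * |v| ^ p * r ^ m := by
  have := hardyField_nonneg hp hφ hd
  positivity

lemma hardyField_eq_one_sub_mul : hardyField p φ d = (1 - φ) * hardyField p 0 d := by
  simp only [hardyField]
  ring

lemma hardyField_rpow_conjExponent (hp : 1 < p) (hφ : φ ≤ 1) (hd : 0 < d) :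
    hardyField p φ d ^ (p / (p - 1)) = ((p - 1) / p) ^ p * (1 - φ) ^ (p / (p - 1)) / d ^ p := by
  have hp₁ : 0 < p - 1 := by linarith
  have hφ₁ : 0 ≤ 1 - φ := by linarith
  have hH : 0 ≤ (p - 1) / p := by positivity
  rw [hardyField, Real.mul_rpow (by positivity) (by positivity),
    Real.mul_rpow (by positivity) hφ₁, ← Real.rpow_mul hH, ← Real.rpow_mul hd.le,
    mul_div_cancel₀ _ hp₁.ne', show (1 - p) * (p / (p - 1)) = -p by field_simp; ring,
    Real.rpow_neg hd.le, ← div_eq_mul_inv]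

lemma hardy_rpow_eq_mul (hp : 1 < p) :
    ((p - 1) / p) ^ p = ((p - 1) / p) ^ (p - 1) * ((p - 1) / p) := by
  have hH : 0 < (p - 1) / p := div_pos (by linarith) (by linarith)
  rw [← Real.rpow_add_one hH.ne', sub_add_cancel]

lemma hasDerivAt_hardyField {φ : ℝ → ℝ} {R r : ℝ} (hφ : HasDerivAt φ φ' r) (hr : r < R) :
    HasDerivAt (fun r ↦ hardyField p (φ r) (R - r))
      (((p - 1) / p) ^ (p - 1) * ((p - 1) * (1 - φ r) - (R - r) * φ') / (R - r) ^ p) r := by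
  have hd : 0 < R - r := sub_pos.2 hr
  have hpow : HasDerivAt (fun r ↦ (R - r) ^ (1 - p)) ((p - 1) / (R - r) ^ p) r := by
    refine (((hasDerivAt_id' r).const_sub R).rpow_const (Or.inl hd.ne')).congr_deriv ?_
    rw [show 1 - p - 1 = -p by ring, Real.rpow_neg hd.le]
    ring
  refine (((hφ.const_sub 1).const_mul (((p - 1) / p) ^ (p - 1))).mul hpow).congr_deriv ?_
  rw [Real.rpow_sub hd, Real.rpow_one]
  ring

lemma hardyField_riccati (hp : 1 < p) (hφ : φ ∈ Icc 0 1) (hd : 0 < d) :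
    ((p - 1) / p) ^ (p - 1) * ((p - 1) / p - d * φ' - p / 2 * φ ^ 2) / d ^ p ≤
      ((p - 1) / p) ^ (p - 1) * ((p - 1) * (1 - φ) - d * φ') / d ^ p -
        (p - 1) * hardyField p φ d ^ (p / (p - 1)) := by
  have hp₁ : 0 < p - 1 := by linarith
  have hquad := one_sub_rpow_le_quadratic (q := p / (p - 1)) (by positivity) hφ
  have hbracket : (p - 1) / p - d * φ' - p / 2 * φ ^ 2 ≤
      (p - 1) * (1 - φ) - d * φ' - (p - 1) * ((p - 1) / p) * (1 - φ) ^ (p / (p - 1)) := by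
    have hmul := mul_le_mul_of_nonneg_left hquad
      (show 0 ≤ (p - 1) * ((p - 1) / p) by positivity)
    have hexpand : (p - 1) * ((p - 1) / p) *
          (1 - p / (p - 1) * φ + (p / (p - 1) * φ) ^ 2 / 2) =
        (p - 1) * (1 - φ) - (p - 1) / p + p / 2 * φ ^ 2 := by
      field_simp
      ring
    linarith
  rw [hardyField_rpow_conjExponent hp hφ.2 hd, hardy_rpow_eq_mul hp]
  calc _ ≤ ((p - 1) / p) ^ (p - 1) * ((p - 1) * (1 - φ) - d * φ' -
          (p - 1) * ((p - 1) / p) * (1 - φ) ^ (p / (p - 1))) / d ^ p := by gcongr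
    _ = _ := by ring

variable {c v w δ : ℝ}

lemma rpow_le_hardyDensity_neg (hc : 0 ≤ c) (hd : 0 ≤ d) :
    w ^ p ≤ hardyDensity p (-c) d v w := by
  rw [hardyDensity, neg_mul, sub_neg_eq_add, le_add_iff_nonneg_right]
  positivity

lemma hardyDensity_neg_nonneg (hc : 0 ≤ c) (hd : 0 ≤ d) (hw : 0 ≤ w) :
    0 ≤ hardyDensity p (-c) d v w :=
  (Real.rpow_nonneg hw p).trans (rpow_le_hardyDensity_neg hc hd)

lemma abs_rpow_le_mul_hardyDensity_neg (hp : 0 ≤ p) (hc : 0 < c) (hd : 0 < d) (hdδ : d ≤ δ)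
    (hw : 0 ≤ w) : |v| ^ p ≤ δ ^ p / c * hardyDensity p (-c) d v w := by
  have hδ : 0 < δ := hd.trans_le hdδ
  calc |v| ^ p = d ^ p / c * (c * (|v| ^ p / d ^ p)) := by field_simp
    _ ≤ δ ^ p / c * (w ^ p + c * (|v| ^ p / d ^ p)) := by
        gcongr
        exact le_add_of_nonneg_left (by positivity)
    _ = δ ^ p / c * hardyDensity p (-c) d v w := by rw [hardyDensity]; ring

-- Part of the gain `ε / 2` in the potential term is traded for part of the gradient term.
lemma one_sub_mul_hardyDensity_le (hp : 1 < p) {ε : ℝ} (hε₀ : 0 ≤ ε)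
    (hε : ε ≤ 1 / (4 * p)) (hd : 0 ≤ d) :
    (1 - ε / 6) * hardyDensity p (((p - 1) / p) ^ (p - 1) * ((p - 1) / p + ε / 2)) d v w ≤
      hardyDensity p (((p - 1) / p) ^ p) d v w -
        ε / 6 * hardyDensity p (-((p - 1) / p) ^ (p - 1)) d v w := by
  have hp₀ : 0 < p := by linarith
  have : 0 ≤ p - 1 := by linarith
  have hε₁ : ε ≤ 1 / 4 := hε.trans (by gcongr; linarith)
  have hH : (p - 1) / p ≤ 1 := div_le_one_of_le₀ (by linarith) hp₀.le
  have hcoeff : (p - 1) / p + ε / 6 ≤ (1 - ε / 6) * ((p - 1) / p + ε / 2) := by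
    nlinarith
  have hmul := mul_le_mul_of_nonneg_left hcoeff
    (show 0 ≤ ((p - 1) / p) ^ (p - 1) * (|v| ^ p / d ^ p) by positivity)
  rw [hardy_rpow_eq_mul hp]
  simp only [hardyDensity]
  linarith

end Pointwise

section Ray

variable {p a b : ℝ} {f f' g : ℝ → ℝ}

lemma sub_le_integral_of_riccati (hp : 1 < p) (m : ℕ) (ha : 0 ≤ a) (hab : a ≤ b)
    (hf : ∀ r ∈ Icc a b, HasDerivAt f (f' r) r) (hg : ContinuousOn g (Icc a b))
    (hfg : ∀ r ∈ Icc a b, |f' r| ≤ g r) {T T' V : ℝ → ℝ}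
    (hT : ∀ r ∈ Icc a b, HasDerivAt T (T' r) r) (hT₀ : ∀ r ∈ Icc a b, 0 ≤ T r)
    (hV : ContinuousOn V (Icc a b))
    (hTV : ∀ r ∈ Icc a b, V r ≤ T' r - (p - 1) * T r ^ (p / (p - 1))) :
    T a * |f a| ^ p * a ^ m - T b * |f b| ^ p * b ^ m ≤
      ∫ r in a..b, r ^ m * (g r ^ p - V r * |f r| ^ p) := by
  have hp₀ : 0 ≤ p := by linarith
  have hflux : ∀ r ∈ Icc a b, HasDerivAt (fun r ↦ -(T r * |f r| ^ p * r ^ m))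
      (-((T' r * |f r| ^ p + T r * (p * |f r| ^ (p - 2) * f r * f' r)) * r ^ m +
        T r * |f r| ^ p * (m * r ^ (m - 1)))) r := fun r hr ↦
    (((hT r hr).mul ((hasDerivAt_abs_rpow (f r) hp).comp r (hf r hr))).mul
      (hasDerivAt_pow m r)).neg
  have hfc : ContinuousOn f (Icc a b) := fun r hr ↦ (hf r hr).continuousAt.continuousWithinAt
  have hint : IntegrableOn (fun r ↦ r ^ m * (g r ^ p - V r * |f r| ^ p)) (Icc a b) := by
    refine ContinuousOn.integrableOn_Icc ?_
    have := hg.rpow_const fun r _ ↦ Or.inr hp₀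
    have := hfc.abs.rpow_const fun r _ ↦ Or.inr hp₀
    fun_prop
  have hle := intervalIntegral.sub_le_integral_of_hasDeriv_right_of_le hab
    (fun r hr ↦ (hflux r hr).continuousAt.continuousWithinAt)
    (fun r hr ↦ (hflux r (Ioo_subset_Icc_self hr)).hasDerivWithinAt) hint fun r hr ↦ ?_
  · linarith
  replace hr := Ioo_subset_Icc_self hr
  have hr₀ : 0 ≤ r := ha.trans hr.1
  have hT₀ := hT₀ r hr
  have hyoung := neg_mul_deriv_abs_rpow_le hp hT₀ (f r) (f' r)
  have hgrad : |f' r| ^ p ≤ g r ^ p := Real.rpow_le_rpow (abs_nonneg _) (hfg r hr) hp₀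
  have hpot := mul_le_mul_of_nonneg_right (hTV r hr) (Real.rpow_nonneg (abs_nonneg (f r)) p)
  have hpow : 0 ≤ T r * |f r| ^ p * (m * r ^ (m - 1)) := by positivity
  have hbound : -(T' r * |f r| ^ p + T r * (p * |f r| ^ (p - 2) * f r * f' r)) ≤
      g r ^ p - V r * |f r| ^ p := by linarith
  linarith [mul_le_mul_of_nonneg_left hbound (pow_nonneg hr₀ m)]

variable {R : ℝ}

lemma sub_le_integral_hardyDensity (hp : 1 < p) (m : ℕ) (ha : 0 ≤ a) (hab : a ≤ b) (hb : b < R)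
    (hf : ∀ r ∈ Icc a b, HasDerivAt f (f' r) r) (hg : ContinuousOn g (Icc a b))
    (hfg : ∀ r ∈ Icc a b, |f' r| ≤ g r) {φ φ' : ℝ → ℝ}
    (hφ : ∀ r ∈ Icc a b, HasDerivAt φ (φ' r) r) (hφ₀₁ : ∀ r ∈ Icc a b, φ r ∈ Icc 0 1) {κ : ℝ}
    (hκ : ∀ r ∈ Icc a b, κ ≤ (p - 1) / p - (R - r) * φ' r - p / 2 * φ r ^ 2) :
    hardyField p (φ a) (R - a) * |f a| ^ p * a ^ m -
        hardyField p (φ b) (R - b) * |f b| ^ p * b ^ m ≤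
      ∫ r in a..b, r ^ m * hardyDensity p (((p - 1) / p) ^ (p - 1) * κ) (R - r) (f r) (g r) := by
  have hd : ∀ r ∈ Icc a b, 0 < R - r := fun r hr ↦ by linarith [hr.2]
  have hV : ContinuousOn (fun r ↦ ((p - 1) / p) ^ (p - 1) * κ / (R - r) ^ p) (Icc a b) :=
    continuousOn_const.div
      ((by fun_prop : ContinuousOn (fun r ↦ R - r) _).rpow_const fun r hr ↦ Or.inl (hd r hr).ne')
      fun r hr ↦ (Real.rpow_pos_of_pos (hd r hr) p).ne'
  refine (sub_le_integral_of_riccati hp m ha hab hf hg hfg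
    (fun r hr ↦ hasDerivAt_hardyField (hφ r hr) (hr.2.trans_lt hb))
    (fun r hr ↦ hardyField_nonneg hp (hφ₀₁ r hr).2 (hd r hr).le) hV fun r hr ↦ ?_).trans_eq ?_
  · have hdr := hd r hr
    refine le_trans ?_ (hardyField_riccati hp (hφ₀₁ r hr) hdr)
    have := sub_one_div_rpow_pos hp (p - 1)
    gcongr
    exact hκ r hr
  · simp only [hardyDensity]
    congr! 3
    ring

lemma neg_mul_hardyField_le_integral_hardyDensity (hp : 1 < p) (m : ℕ) (hb : 0 ≤ b) (hbR : b < R)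
    (hf : ∀ r ∈ Icc 0 b, HasDerivAt f (f' r) r) (hg : ContinuousOn g (Icc 0 b))
    (hfg : ∀ r ∈ Icc 0 b, |f' r| ≤ g r) {D : ℝ} (hD : R ≤ D) :
    -((1 - logWeight ((R - b) / D) / p) * (hardyField p 0 (R - b) * |f b| ^ p * b ^ m)) ≤
      ∫ r in 0..b, r ^ m * hardyDensity p (((p - 1) / p) ^ p) (R - r) (f r) (g r) := by
  have hp₀ : 0 < p := by linarith
  set X := fun r ↦ logWeight ((R - r) / D)
  have hX : ∀ r ∈ Icc 0 b, X r ∈ Ioc 0 1 := fun r hr ↦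
    logWeight_sub_div_mem_Ioc hr.1 (by linarith [hr.2]) hD
  have hφ₀₁ : ∀ r ∈ Icc 0 b, X r / p ∈ Icc 0 1 := fun r hr ↦
    ⟨div_nonneg (hX r hr).1.le hp₀.le, div_le_one_of_le₀ (by linarith [(hX r hr).2]) hp₀.le⟩
  have hφ : ∀ r ∈ Icc 0 b, HasDerivAt (fun r ↦ X r / p) (-(X r ^ 2 / (R - r)) / p) r := fun r hr ↦
    (hasDerivAt_logWeight_sub_div hr.1 (hr.2.trans_lt hbR) hD).div_const p
  have hseg := sub_le_integral_hardyDensity hp m le_rfl hb hbR hf hg hfg hφ hφ₀₁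
    (κ := (p - 1) / p) fun r hr ↦ by
      have hd : R - r ≠ 0 := by linarith [hr.2]
      have hgain : -((R - r) * (-(X r ^ 2 / (R - r)) / p)) - p / 2 * (X r / p) ^ 2 =
          X r ^ 2 / (2 * p) := by
        field_simp
        ring
      have : 0 ≤ X r ^ 2 / (2 * p) := by positivity
      linarith
  rw [← hardy_rpow_eq_mul hp] at hseg
  have hstart : 0 ≤ hardyField p (X 0 / p) (R - 0) * |f 0| ^ p * 0 ^ m :=
    hardyField_mul_nonneg hp (hφ₀₁ 0 (left_mem_Icc.2 hb)).2 (by linarith) m _ le_rfl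
  refine le_trans (le_of_eq ?_) ((sub_le_sub_right hstart _).trans hseg)
  simp only [hardyField, X]
  ring

lemma hardyField_le_integral_hardyDensity (hp : 1 < p) (m : ℕ) (ha : 0 ≤ a) (hab : a ≤ b)
    (hb : b < R) (hf : ∀ r ∈ Icc a b, HasDerivAt f (f' r) r) (hg : ContinuousOn g (Icc a b))
    (hfg : ∀ r ∈ Icc a b, |f' r| ≤ g r) (hfb : f b = 0) :
    hardyField p 0 (R - a) * |f a| ^ p * a ^ m ≤
      ∫ r in a..b, r ^ m * hardyDensity p (((p - 1) / p) ^ p) (R - r) (f r) (g r) := by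
  have hseg := sub_le_integral_hardyDensity hp m ha hab hb hf hg hfg
    (fun r _ ↦ hasDerivAt_const r 0) (by simp) (κ := (p - 1) / p) (by simp)
  rwa [← hardy_rpow_eq_mul hp, hfb, abs_zero, Real.zero_rpow (by linarith), mul_zero, zero_mul,
    sub_zero] at hseg

lemma continuousOn_pow_mul_hardyDensity (hp : 0 ≤ p) (m : ℕ) (c : ℝ) (hb : b < R)
    (hf : ContinuousOn f (Icc a b)) (hg : ContinuousOn g (Icc a b)) :
    ContinuousOn (fun r ↦ r ^ m * hardyDensity p c (R - r) (f r) (g r)) (Icc a b) := by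
  have hd : ∀ r ∈ Icc a b, 0 < R - r := fun r hr ↦ by linarith [hr.2]
  refine (continuousOn_pow m).mul ((hg.rpow_const fun _ _ ↦ Or.inr hp).sub
    (continuousOn_const.mul ((hf.abs.rpow_const fun _ _ ↦ Or.inr hp).div
      ((continuousOn_const.sub continuousOn_id).rpow_const fun r hr ↦ Or.inl (hd r hr).ne')
      fun r hr ↦ (Real.rpow_pos_of_pos (hd r hr) p).ne')))

lemma sub_le_integral_hardyDensity_add (hp : 1 < p) (m : ℕ) (ha : 0 ≤ a) (hab : a ≤ b)
    (hb : b < R) (hRab : R - a ≤ 3 * (R - b)) (hf : ∀ r ∈ Icc a b, HasDerivAt f (f' r) r)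
    (hg : ContinuousOn g (Icc a b)) (hfg : ∀ r ∈ Icc a b, |f' r| ≤ g r) {ε : ℝ} (hε₀ : 0 ≤ ε)
    (hε : ε ≤ 1 / (4 * p)) :
    (1 - 2 * ε) * (hardyField p 0 (R - a) * |f a| ^ p * a ^ m) -
        hardyField p 0 (R - b) * |f b| ^ p * b ^ m ≤
      ∫ r in a..b, r ^ m *
        hardyDensity p (((p - 1) / p) ^ (p - 1) * ((p - 1) / p + ε / 2)) (R - r) (f r) (g r) := by
  have hdb : 0 < R - b := sub_pos.2 hb
  set L := fun r ↦ Real.log ((R - r) / (R - b))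
  have hL : ∀ r ∈ Icc a b, L r ∈ Icc 0 2 := fun r hr ↦
    log_div_mem_Icc hdb (by linarith [hr.2]) (by linarith [hr.1])
  have hεp : ε * p ≤ 1 / 4 := by
    rw [le_div_iff₀ (by linarith)] at hε
    linarith
  have hφ₀₁ : ∀ r ∈ Icc a b, ε * L r ∈ Icc 0 1 := fun r hr ↦
    ⟨mul_nonneg hε₀ (hL r hr).1, by nlinarith [(hL r hr).2]⟩
  have hseg := sub_le_integral_hardyDensity hp m ha hab hb hf hg hfg
    (fun r hr ↦ (hasDerivAt_log_sub_div (hr.2.trans_lt hb) hdb.ne').const_mul ε) hφ₀₁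
    (κ := (p - 1) / p + ε / 2) fun r hr ↦ by
      have hd : R - r ≠ 0 := by linarith [hr.2]
      have hgain : (R - r) * (ε * -(R - r)⁻¹) = -ε := by field_simp
      have hsq : (ε * L r) ^ 2 ≤ (ε * 2) ^ 2 :=
        pow_le_pow_left₀ (hφ₀₁ r hr).1 (mul_le_mul_of_nonneg_left (hL r hr).2 hε₀) 2
      nlinarith
  have hend : hardyField p (ε * L b) (R - b) = hardyField p 0 (R - b) := by
    simp only [L, div_self hdb.ne', Real.log_one, mul_zero]
  have hstart : (1 - 2 * ε) * hardyField p 0 (R - a) ≤ hardyField p (ε * L a) (R - a) := by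
    rw [hardyField_eq_one_sub_mul (φ := ε * L a)]
    exact mul_le_mul_of_nonneg_right (by nlinarith [(hL a (left_mem_Icc.2 hab)).2])
      (hardyField_nonneg hp zero_le_one (by linarith))
  rw [hend] at hseg
  refine le_trans (sub_le_sub_right ?_ _) hseg
  rw [← mul_assoc, ← mul_assoc]
  gcongr

lemma sub_le_integral_hardyDensity_sub (hp : 1 < p) (m : ℕ) (ha : 0 ≤ a) (hab : a ≤ b)
    (hb : b < R) (hRab : R - a ≤ 3 * (R - b)) (hf : ∀ r ∈ Icc a b, HasDerivAt f (f' r) r)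
    (hg : ContinuousOn g (Icc a b)) (hfg : ∀ r ∈ Icc a b, |f' r| ≤ g r) {ε : ℝ} (hε₀ : 0 ≤ ε)
    (hε : ε ≤ 1 / (4 * p)) :
    (1 - 3 * ε) * (hardyField p 0 (R - a) * |f a| ^ p * a ^ m) -
        hardyField p 0 (R - b) * |f b| ^ p * b ^ m ≤
      (∫ r in a..b, r ^ m * hardyDensity p (((p - 1) / p) ^ p) (R - r) (f r) (g r)) -
        ε / 6 * ∫ r in a..b,
          r ^ m * hardyDensity p (-((p - 1) / p) ^ (p - 1)) (R - r) (f r) (g r) := by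
  have hε₁ : ε ≤ 1 := hε.trans (div_le_one_of_le₀ (by linarith) (by linarith))
  have hfc : ContinuousOn f (Icc a b) := fun r hr ↦ (hf r hr).continuousAt.continuousWithinAt
  have hint := fun c ↦ (continuousOn_pow_mul_hardyDensity (p := p) (by linarith) m c hb hfc
    hg).intervalIntegrable_of_Icc (μ := volume) hab
  have hseg := sub_le_integral_hardyDensity_add hp m ha hab hb hRab hf hg hfg hε₀ hε
  set Fa := hardyField p 0 (R - a) * |f a| ^ p * a ^ m
  set Fb := hardyField p 0 (R - b) * |f b| ^ p * b ^ m
  have hFa : 0 ≤ Fa := hardyField_mul_nonneg hp zero_le_one (by linarith) m _ ha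
  have hFb : 0 ≤ Fb := hardyField_mul_nonneg hp zero_le_one (by linarith) m _ (ha.trans hab)
  calc (1 - 3 * ε) * Fa - Fb ≤ (1 - ε / 6) * ((1 - 2 * ε) * Fa - Fb) := by
        linarith [mul_nonneg hε₀ hFa, mul_nonneg hε₀ hFb, mul_nonneg (sq_nonneg ε) hFa]
    _ ≤ (1 - ε / 6) * ∫ r in a..b, r ^ m *
          hardyDensity p (((p - 1) / p) ^ (p - 1) * ((p - 1) / p + ε / 2)) (R - r) (f r) (g r) :=
        mul_le_mul_of_nonneg_left hseg (by linarith)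
    _ = ∫ r in a..b, (1 - ε / 6) * (r ^ m *
          hardyDensity p (((p - 1) / p) ^ (p - 1) * ((p - 1) / p + ε / 2)) (R - r) (f r) (g r)) :=
        (intervalIntegral.integral_const_mul _ _).symm
    _ ≤ ∫ r in a..b, (r ^ m * hardyDensity p (((p - 1) / p) ^ p) (R - r) (f r) (g r) -
          ε / 6 * (r ^ m * hardyDensity p (-((p - 1) / p) ^ (p - 1)) (R - r) (f r) (g r))) := by
        refine intervalIntegral.integral_mono_on hab ((hint _).const_mul _)
          ((hint _).sub ((hint _).const_mul _)) fun r hr ↦ ?_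
        rw [mul_left_comm, mul_left_comm (ε / 6), ← mul_sub]
        exact mul_le_mul_of_nonneg_left
          (one_sub_mul_hardyDensity_le hp hε₀ hε (by linarith [hr.2]))
          (pow_nonneg (ha.trans hr.1) m)
    _ = _ := by
        rw [intervalIntegral.integral_sub (hint _) ((hint _).const_mul _),
          intervalIntegral.integral_const_mul]

lemma logWeight_mul_integral_hardyDensity_le (hp : 1 < p) (m : ℕ) {c D : ℝ} (ha : 0 ≤ a)
    (hab : a ≤ b) (hbc : b ≤ c) (hc : c < R) (hD : R ≤ D) (hRab : R - a ≤ 3 * (R - b))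
    (hf : ∀ r ∈ Icc 0 c, HasDerivAt f (f' r) r) (hg : ContinuousOn g (Icc 0 c))
    (hfg : ∀ r ∈ Icc 0 c, |f' r| ≤ g r) (hfc : f c = 0) :
    logWeight ((R - a) / D) / (24 * p) *
        ∫ r in a..b, r ^ m * hardyDensity p (-((p - 1) / p) ^ (p - 1)) (R - r) (f r) (g r) ≤
      ∫ r in 0..c, r ^ m * hardyDensity p (((p - 1) / p) ^ p) (R - r) (f r) (g r) := by
  have hb : 0 ≤ b := ha.trans hab
  have hfcont : ContinuousOn f (Icc 0 c) := fun r hr ↦ (hf r hr).continuousAt.continuousWithinAt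
  have hcont := continuousOn_pow_mul_hardyDensity (p := p) (by linarith) m (((p - 1) / p) ^ p) hc
    hfcont hg
  have hac : Icc 0 a ⊆ Icc 0 c := Icc_subset_Icc_right (hab.trans hbc)
  have habc : Icc a b ⊆ Icc 0 c := Icc_subset_Icc ha hbc
  have hbc' : Icc b c ⊆ Icc 0 c := Icc_subset_Icc_left hb
  have hX := logWeight_sub_div_mem_Ioc ha (by linarith) hD
  set ε := logWeight ((R - a) / D) / (4 * p) with hε_def
  have hε₀ : 0 ≤ ε := div_nonneg hX.1.le (by linarith)
  have hε : ε ≤ 1 / (4 * p) := by rw [hε_def]; gcongr; exact hX.2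
  have hinner := neg_mul_hardyField_le_integral_hardyDensity hp m ha (by linarith)
    (fun r hr ↦ hf r (hac hr)) (hg.mono hac) (fun r hr ↦ hfg r (hac hr)) hD
  have hmiddle := sub_le_integral_hardyDensity_sub hp m ha hab (by linarith) hRab
    (fun r hr ↦ hf r (habc hr)) (hg.mono habc) (fun r hr ↦ hfg r (habc hr)) hε₀ hε
  have houter := hardyField_le_integral_hardyDensity hp m hb hbc hc
    (fun r hr ↦ hf r (hbc' hr)) (hg.mono hbc') (fun r hr ↦ hfg r (hbc' hr)) hfc
  have hflux : 0 ≤ hardyField p 0 (R - a) * |f a| ^ p * a ^ m :=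
    hardyField_mul_nonneg hp zero_le_one (by linarith) m _ ha
  have hX_div : logWeight ((R - a) / D) / p = 4 * ε := by rw [hε_def]; ring
  rw [hX_div] at hinner
  have hint_ac := (hcont.mono hac).intervalIntegrable_of_Icc (μ := volume) ha
  have hint_abc := (hcont.mono habc).intervalIntegrable_of_Icc (μ := volume) hab
  have hint_bc := (hcont.mono hbc').intervalIntegrable_of_Icc (μ := volume) hbc
  rw [← intervalIntegral.integral_add_adjacent_intervals (hint_ac.trans hint_abc) hint_bc,
    ← intervalIntegral.integral_add_adjacent_intervals hint_ac hint_abc,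
    show logWeight ((R - a) / D) / (24 * p) = ε / 6 by rw [hε_def]; ring]
  linarith [mul_nonneg hε₀ hflux]

end Ray

section Polar

variable {E : Type*} [NormedAddCommGroup E] [NormedSpace ℝ E] [FiniteDimensional ℝ E]
  [MeasurableSpace E] [BorelSpace E] {μ : Measure E} [μ.IsAddHaarMeasure]

lemma integral_volumeIoiPow {F : Type*} [NormedAddCommGroup F] [NormedSpace ℝ F] (m : ℕ)
    (f : ℝ → F) :
    ∫ r : Ioi (0 : ℝ), f r ∂Measure.volumeIoiPow m = ∫ r in Ioi (0 : ℝ), r ^ m • f r := by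
  simp only [Measure.volumeIoiPow, ENNReal.ofReal]
  rw [integral_withDensity_eq_integral_smul (measurable_subtype_coe.pow_const _).real_toNNReal,
    integral_subtype_comap measurableSet_Ioi fun r ↦ Real.toNNReal (r ^ m) • f r]
  refine setIntegral_congr_fun measurableSet_Ioi fun r hr ↦ ?_
  simp only [NNReal.smul_def, Real.coe_toNNReal _ (pow_nonneg (mem_Ioi.1 hr).le m)]

lemma measurePreserving_smul_toSphere_prod [Nontrivial E] :
    MeasurePreserving (fun z : sphere (0 : E) 1 × Ioi (0 : ℝ) ↦ (z.2 : ℝ) • (z.1 : E))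
      (μ.toSphere.prod (Measure.volumeIoiPow (Module.finrank ℝ E - 1))) μ := by
  have hpolar := (μ.measurePreserving_homeomorphUnitSphereProd).symm
    (homeomorphUnitSphereProd E).toMeasurableEquiv
  have hcoe := measurePreserving_subtype_coe (μa := μ) (measurableSet_singleton (0 : E)).compl
  rw [restrict_compl_singleton] at hcoe
  exact hcoe.comp hpolar

lemma integral_mono_of_forall_ray [Nontrivial E] {Φ Ψ : E → ℝ} (hΦ : Integrable Φ μ)
    (hΨ : Integrable Ψ μ)
    (h : ∀ ω : E, ‖ω‖ = 1 →
      ∫ r in Ioi (0 : ℝ), r ^ (Module.finrank ℝ E - 1) * Φ (r • ω) ≤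
        ∫ r in Ioi (0 : ℝ), r ^ (Module.finrank ℝ E - 1) * Ψ (r • ω)) :
    ∫ y, Φ y ∂μ ≤ ∫ y, Ψ y ∂μ := by
  have hpolar := measurePreserving_smul_toSphere_prod (μ := μ)
  have hint : ∀ {f : E → ℝ}, Integrable f μ →
      Integrable (fun z : sphere (0 : E) 1 × Ioi (0 : ℝ) ↦ f ((z.2 : ℝ) • (z.1 : E)))
        (μ.toSphere.prod (Measure.volumeIoiPow (Module.finrank ℝ E - 1))) := fun hf ↦
    hpolar.integrable_comp_of_integrable hf
  have hprod : ∀ {f : E → ℝ}, Integrable f μ → ∫ y, f y ∂μ = ∫ ω : sphere (0 : E) 1,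
      ∫ r : Ioi (0 : ℝ), f ((r : ℝ) • (ω : E)) ∂Measure.volumeIoiPow (Module.finrank ℝ E - 1)
        ∂μ.toSphere := fun {f} hf ↦ by
    have hmap := integral_map (f := f) hpolar.aemeasurable
      (by rw [hpolar.map_eq]; exact hf.aestronglyMeasurable)
    rw [integral_integral (hint hf), ← hmap, hpolar.map_eq]
  rw [hprod hΦ, hprod hΨ]
  refine integral_mono (hint hΦ).integral_prod_left (hint hΨ).integral_prod_left fun ω ↦ ?_
  simp only [integral_volumeIoiPow _ fun r ↦ Φ (r • (ω : E)),
    integral_volumeIoiPow _ fun r ↦ Ψ (r • (ω : E)), smul_eq_mul]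
  exact h ω (norm_eq_of_mem_sphere ω)

end Polar

section Deficit

variable {E : Type*} [NormedAddCommGroup E] [NormedSpace ℝ E] {u : E → ℝ} {p R : ℝ}

lemma hardyDensity_eq_zero_of_notMem_tsupport (hp : p ≠ 0) (c d : ℝ) {y : E}
    (hy : y ∉ tsupport u) : hardyDensity p c d (u y) ‖fderiv ℝ u y‖ = 0 := by
  have hfderiv : fderiv ℝ u y = 0 := image_eq_zero_of_notMem_tsupport fun h ↦
    hy (tsupport_fderiv_subset ℝ h)
  simp [hardyDensity, image_eq_zero_of_notMem_tsupport hy, hfderiv, Real.zero_rpow hp]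

lemma tsupport_hardyDensity_subset (hp : p ≠ 0) (c : ℝ) (d : E → ℝ) :
    tsupport (fun y ↦ hardyDensity p c (d y) (u y) ‖fderiv ℝ u y‖) ⊆ tsupport u :=
  closure_minimal
    (fun _ hy ↦ by_contra fun h ↦ hy (hardyDensity_eq_zero_of_notMem_tsupport hp c _ h))
    (isClosed_tsupport u)

lemma continuous_hardyDensity (hp : 0 < p) (c : ℝ) (hu : ContDiff ℝ 1 u)
    (hsupp : tsupport u ⊆ ball 0 R) :
    Continuous fun y ↦ hardyDensity p c (R - ‖y‖) (u y) ‖fderiv ℝ u y‖ := by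
  refine continuous_of_tsupport fun y hy ↦ ?_
  have hd : 0 < R - ‖y‖ :=
    sub_pos.2 (mem_ball_zero_iff.1 (hsupp (tsupport_hardyDensity_subset hp.ne' _ _ hy)))
  have hgrad : ContinuousAt (fun y ↦ ‖fderiv ℝ u y‖ ^ p) y :=
    (hu.continuous_fderiv one_ne_zero).norm.continuousAt.rpow_const (Or.inr hp.le)
  have hval : ContinuousAt (fun y ↦ |u y| ^ p) y :=
    hu.continuous.abs.continuousAt.rpow_const (Or.inr hp.le)
  have hdist : ContinuousAt (fun y : E ↦ (R - ‖y‖) ^ p) y :=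
    (continuous_const.sub continuous_norm).continuousAt.rpow_const (Or.inr hp.le)
  exact hgrad.sub (continuousAt_const.mul (hval.div hdist (Real.rpow_pos_of_pos hd p).ne'))

lemma integral_Ioi_indicator_norm_preimage_Icc (m : ℕ) {a b : ℝ} (ha : 0 ≤ a) (hab : a ≤ b)
    {ω : E} (hω : ‖ω‖ = 1) (f : E → ℝ) :
    ∫ r in Ioi (0 : ℝ), r ^ m * (norm ⁻¹' Icc a b).indicator f (r • ω) =
      ∫ r in a..b, r ^ m * f (r • ω) := by
  have hindicator : ∀ r ∈ Ici (0 : ℝ), r ^ m * (norm ⁻¹' Icc a b).indicator f (r • ω) =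
      (Icc a b).indicator (fun r ↦ r ^ m * f (r • ω)) r := fun r hr ↦ by
    have hmem : r • ω ∈ norm ⁻¹' Icc a b ↔ r ∈ Icc a b := by
      rw [mem_preimage, norm_smul, hω, mul_one, Real.norm_of_nonneg hr]
    by_cases h : r ∈ Icc a b
    · rw [indicator_of_mem h, indicator_of_mem (hmem.2 h)]
    · rw [indicator_of_notMem h, indicator_of_notMem (hmem.not.2 h), mul_zero]
  rw [← integral_Ici_eq_integral_Ioi, setIntegral_congr_fun measurableSet_Ici hindicator,
    setIntegral_indicator measurableSet_Icc,
    inter_eq_right.2 (Icc_subset_Ici_self.trans (Ici_subset_Ici.2 ha)),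
    integral_Icc_eq_integral_Ioc, intervalIntegral.integral_of_le hab]

lemma hasDerivAt_comp_smul {F : Type*} [NormedAddCommGroup F] [NormedSpace ℝ F] {f : E → F}
    (hf : Differentiable ℝ f) (ω : E) (r : ℝ) :
    HasDerivAt (fun r : ℝ ↦ f (r • ω)) (fderiv ℝ f (r • ω) ω) r :=
  (hf (r • ω)).hasFDerivAt.comp_hasDerivAt r (by simpa using (hasDerivAt_id' r).smul_const ω)

variable [FiniteDimensional ℝ E]

lemma logWeight_mul_integral_ray_hardyDensity_le (hp : 1 < p) (m : ℕ) {a b D : ℝ} (ha : 0 ≤ a)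
    (hab : a ≤ b) (hbR : b < R) (hD : R ≤ D) (hRab : R - a ≤ 3 * (R - b)) (hu : ContDiff ℝ 1 u)
    (hsupp : tsupport u ⊆ ball 0 R) {ω : E} (hω : ‖ω‖ = 1) :
    logWeight ((R - a) / D) / (24 * p) * ∫ r in a..b, r ^ m *
        hardyDensity p (-((p - 1) / p) ^ (p - 1)) (R - ‖r • ω‖) (u (r • ω))
          ‖fderiv ℝ u (r • ω)‖ ≤
      ∫ r in Ioi (0 : ℝ), r ^ m *
        hardyDensity p (((p - 1) / p) ^ p) (R - ‖r • ω‖) (u (r • ω)) ‖fderiv ℝ u (r • ω)‖ := by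
  obtain ⟨R', hR', hsuppR'⟩ := exists_lt_subset_ball (isClosed_tsupport u) hsupp
  have hc : max b R' < R := max_lt hbR hR'
  have hc₀ : 0 ≤ max b R' := (ha.trans hab).trans (le_max_left b R')
  have hnorm : ∀ {r : ℝ}, 0 ≤ r → ‖r • ω‖ = r := fun hr ↦ by
    rw [norm_smul, hω, mul_one, Real.norm_of_nonneg hr]
  have houtside : ∀ {r : ℝ}, max b R' ≤ r → r • ω ∉ tsupport u := fun {r} hr hmem ↦ by
    have hlt := mem_ball_zero_iff.1 (hsuppR' hmem)
    rw [hnorm (hc₀.trans hr)] at hlt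
    exact hlt.not_ge ((le_max_right b R').trans hr)
  have hgrad : Continuous fun r : ℝ ↦ ‖fderiv ℝ u (r • ω)‖ :=
    ((hu.continuous_fderiv one_ne_zero).comp (by fun_prop)).norm
  have hle := logWeight_mul_integral_hardyDensity_le hp m ha hab (le_max_left b R') hc hD hRab
    (fun r _ ↦ hasDerivAt_comp_smul (hu.differentiable one_ne_zero) ω r) hgrad.continuousOn
    (fun r _ ↦ by simpa [hω] using (fderiv ℝ u (r • ω)).le_opNorm ω)
    (image_eq_zero_of_notMem_tsupport (houtside le_rfl))
  have htail : ∀ r ∈ Ioi (0 : ℝ) \ Ioc 0 (max b R'), r ^ m * hardyDensity p (((p - 1) / p) ^ p)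
      (R - ‖r • ω‖) (u (r • ω)) ‖fderiv ℝ u (r • ω)‖ = 0 := fun r hr ↦ by
    have hr' : max b R' ≤ r := le_of_not_ge fun h ↦ hr.2 ⟨hr.1, h⟩
    rw [hardyDensity_eq_zero_of_notMem_tsupport (by linarith) _ _ (houtside hr'), mul_zero]
  have hcongr : ∀ k {s t : ℝ}, 0 ≤ s → s ≤ t →
      ∫ r in s..t, r ^ m * hardyDensity p k (R - ‖r • ω‖) (u (r • ω)) ‖fderiv ℝ u (r • ω)‖ =
        ∫ r in s..t, r ^ m * hardyDensity p k (R - r) (u (r • ω)) ‖fderiv ℝ u (r • ω)‖ :=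
    fun k s t hs hst ↦ intervalIntegral.integral_congr fun r hr ↦ by
      simp only [hnorm (hs.trans (uIcc_of_le hst ▸ hr).1)]
  rwa [setIntegral_eq_of_subset_of_forall_sdiff_eq_zero measurableSet_Ioi Ioc_subset_Ioi_self htail,
    ← intervalIntegral.integral_of_le hc₀, hcongr _ ha hab, hcongr _ le_rfl hc₀]

variable [MeasurableSpace E] [BorelSpace E] {μ : Measure E}

lemma integrable_hardyDensity [IsFiniteMeasureOnCompacts μ] (hp : 0 < p) (c : ℝ)
    (hu : ContDiff ℝ 1 u) (hsupp : tsupport u ⊆ ball 0 R) :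
    Integrable (fun y ↦ hardyDensity p c (R - ‖y‖) (u y) ‖fderiv ℝ u y‖) μ :=
  (continuous_hardyDensity hp c hu hsupp).integrable_of_hasCompactSupport <|
    isCompact_of_isClosed_isBounded (isClosed_tsupport _) <|
      isBounded_ball.subset ((tsupport_hardyDensity_subset hp.ne' _ _).trans hsupp)

lemma setIntegral_hardyDensity_eq_sub [IsFiniteMeasureOnCompacts μ] (hp : 0 < p) (c : ℝ)
    (hu : ContDiff ℝ 1 u) (hsupp : tsupport u ⊆ ball 0 R) (s : Set E) :
    ∫ y in s, hardyDensity p c (R - ‖y‖) (u y) ‖fderiv ℝ u y‖ ∂μ =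
      (∫ y in s, ‖fderiv ℝ u y‖ ^ p ∂μ) - c * ∫ y in s, |u y| ^ p / (R - ‖y‖) ^ p ∂μ := by
  have hint := fun c ↦ integrable_hardyDensity (μ := μ) hp c hu hsupp
  have hgrad : Integrable (fun y ↦ ‖fderiv ℝ u y‖ ^ p) μ := by
    simpa [hardyDensity] using hint 0
  have hval : Integrable (fun y ↦ |u y| ^ p / (R - ‖y‖) ^ p) μ := by
    simpa [hardyDensity, Pi.sub_def] using hgrad.sub (hint 1)
  simp only [hardyDensity]
  rw [integral_sub hgrad.integrableOn (hval.integrableOn.const_mul c), integral_const_mul]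

lemma logWeight_mul_setIntegral_hardyDensity_le [Nontrivial E] [μ.IsAddHaarMeasure] (hp : 1 < p)
    {a b D : ℝ} (ha : 0 ≤ a) (hab : a ≤ b) (hbR : b < R) (hD : R ≤ D)
    (hRab : R - a ≤ 3 * (R - b)) (hu : ContDiff ℝ 1 u) (hsupp : tsupport u ⊆ ball 0 R) :
    logWeight ((R - a) / D) / (24 * p) * ∫ y in norm ⁻¹' Icc a b,
        hardyDensity p (-((p - 1) / p) ^ (p - 1)) (R - ‖y‖) (u y) ‖fderiv ℝ u y‖ ∂μ ≤
      ∫ y in ball 0 R,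
        hardyDensity p (((p - 1) / p) ^ p) (R - ‖y‖) (u y) ‖fderiv ℝ u y‖ ∂μ := by
  have hp₀ : 0 < p := by linarith
  have hA : MeasurableSet (norm ⁻¹' Icc a b : Set E) := measurable_norm measurableSet_Icc
  have hint := fun c ↦ integrable_hardyDensity (μ := μ) hp₀ c hu hsupp
  rw [← integral_indicator hA, ← integral_const_mul,
    setIntegral_eq_integral_of_forall_compl_eq_zero fun y hy ↦
      hardyDensity_eq_zero_of_notMem_tsupport hp₀.ne' _ _ fun h ↦ hy (hsupp h)]
  refine integral_mono_of_forall_ray (((hint _).indicator hA).const_mul _) (hint _) fun ω hω ↦ ?_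
  simp only [mul_left_comm _ (logWeight _ / _)]
  rw [integral_const_mul, integral_Ioi_indicator_norm_preimage_Icc _ ha hab hω]
  exact logWeight_mul_integral_ray_hardyDensity_le hp _ ha hab hbR hD hRab hu hsupp hω

end Deficit

section Average

variable {α : Type*} [MeasurableSpace α] {ν : Measure α} {s : Set α} {f g : α → ℝ}

lemma setAverage_mono_on (hf : IntegrableOn f s ν) (hg : IntegrableOn g s ν)
    (hs : MeasurableSet s) (hfg : ∀ y ∈ s, f y ≤ g y) : ⨍ y in s, f y ∂ν ≤ ⨍ y in s, g y ∂ν := by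
  rw [setAverage_eq, setAverage_eq]
  exact smul_le_smul_of_nonneg_left (setIntegral_mono_on hf hg hs hfg) (by positivity)

lemma rpow_setAverage_rpow_le_mul {p k : ℝ} (hp : 0 ≤ p) (hk : 0 < k) (hs : MeasurableSet s)
    (hf₀ : 0 ≤ f) (hf : IntegrableOn (fun y ↦ f y ^ p) s ν) (hg : IntegrableOn g s ν)
    (hfg : ∀ y ∈ s, f y ^ p ≤ k * g y) :
    (⨍ y in s, f y ^ p ∂ν) ^ (1 / p) ≤ k ^ (1 / p) * (⨍ y in s, g y ∂ν) ^ (1 / p) := by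
  have hmean₀ : 0 ≤ ⨍ y in s, f y ^ p ∂ν := integral_nonneg fun y ↦ Real.rpow_nonneg (hf₀ y) p
  have hmean : ⨍ y in s, f y ^ p ∂ν ≤ k * ⨍ y in s, g y ∂ν := by
    refine (setAverage_mono_on hf (hg.const_mul k) hs hfg).trans_eq ?_
    simp only [setAverage_eq, integral_const_mul, smul_eq_mul, mul_left_comm]
  rw [← Real.mul_rpow hk.le (nonneg_of_mul_nonneg_right (hmean₀.trans hmean) hk)]
  exact Real.rpow_le_rpow hmean₀ hmean (by positivity)

end Average

section BallMeasure

variable {α : Type*} [PseudoMetricSpace α] [ProperSpace α] [MeasurableSpace α] {μ : Measure α}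
  [IsFiniteMeasureOnCompacts μ] {x : α} {ρ : ℝ}

lemma integrableOn_closedBall_of_continuous [OpensMeasurableSpace α] {F : Type*}
    [NormedAddCommGroup F] {f : α → F} (hf : Continuous f) : IntegrableOn f (closedBall x ρ) μ :=
  hf.continuousOn.integrableOn_compact' (isCompact_closedBall x ρ) measurableSet_closedBall

lemma measureReal_ball_pos [μ.IsOpenPosMeasure] (hρ : 0 < ρ) : 0 < μ.real (ball x ρ) :=
  ENNReal.toReal_pos (measure_ball_pos μ x hρ).ne' measure_ball_lt_top.ne

end BallMeasure

section Morrey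

variable {E : Type*} [NormedAddCommGroup E] [NormedSpace ℝ E]
  {F : Type*} [NormedAddCommGroup F] [NormedSpace ℝ F] {p ρ : ℝ}

lemma norm_sub_le_integral_norm_fderiv {u : E → F} (hu : ContDiff ℝ 1 u) (x : E) (hρ : 0 ≤ ρ)
    {z : E} (hz : ‖z‖ ≤ 1) :
    ‖u (x + ρ • z) - u x‖ ≤ ∫ t in 0..ρ, ‖fderiv ℝ u (x + t • z)‖ := by
  have hderiv : ∀ t, HasDerivAt (fun t : ℝ ↦ u (x + t • z)) (fderiv ℝ u (x + t • z) z) t :=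
    fun t ↦ (hu.differentiable one_ne_zero _).hasFDerivAt.comp_hasDerivAt t
      (by simpa using ((hasDerivAt_id' t).smul_const z).const_add x)
  have hbound := norm_sub_le_integral_of_norm_deriv_le_of_le hρ
    (fun t _ ↦ (hderiv t).continuousAt.continuousWithinAt)
    (fun t _ ↦ (hderiv t).differentiableAt.differentiableWithinAt)
    (ae_of_all _ fun t _ ↦ (hderiv t).deriv ▸
      (ContinuousLinearMap.le_of_opNorm_le_of_le _ le_rfl hz).trans_eq (mul_one _))
    (((hu.continuous_fderiv one_ne_zero).comp (by fun_prop)).norm.intervalIntegrable 0 ρ)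
  simpa using hbound

variable [FiniteDimensional ℝ E] [MeasurableSpace E] [BorelSpace E] {μ : Measure E}
  [μ.IsAddHaarMeasure] {x : E}

lemma setAverage_closedBall_eq_unitClosedBall (f : E → F) (x : E) (hρ : 0 < ρ) :
    ⨍ y in closedBall x ρ, f y ∂μ = ⨍ z in closedBall 0 1, f (x + ρ • z) ∂μ := by
  have htranslate := (measurePreserving_add_left μ x).setIntegral_preimage_emb
    (measurableEmbedding_addLeft x) f (closedBall x ρ)
  rw [preimage_add_closedBall, sub_self] at htranslate
  rw [setAverage_eq, setAverage_eq, Measure.setIntegral_comp_smul_of_pos μ (fun y ↦ f (x + y)) _ hρ,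
    smul_unitClosedBall_of_nonneg hρ.le, htranslate, Measure.addHaar_real_closedBall' μ x hρ.le,
    smul_smul, mul_inv, mul_comm (ρ ^ Module.finrank ℝ E)⁻¹]

lemma setAverage_closedBall_le_mul {f : E → ℝ} (hf : Continuous f) (hf₀ : 0 ≤ f) {t : ℝ}
    (ht : 0 < t) (htρ : t ≤ ρ) :
    ⨍ y in closedBall x t, f y ∂μ ≤
      (ρ / t) ^ Module.finrank ℝ E * ⨍ y in closedBall x ρ, f y ∂μ := by
  have hρ : 0 < ρ := ht.trans_le htρ
  have hmono : ∫ y in closedBall x t, f y ∂μ ≤ ∫ y in closedBall x ρ, f y ∂μ :=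
    setIntegral_mono_set (integrableOn_closedBall_of_continuous hf)
      (ae_of_all _ hf₀) (closedBall_subset_closedBall htρ).eventuallyLE
  rw [setAverage_eq, setAverage_eq, Measure.addHaar_real_closedBall μ x ht.le,
    Measure.addHaar_real_closedBall μ x hρ.le, smul_eq_mul, smul_eq_mul]
  calc _ ≤ (t ^ Module.finrank ℝ E * μ.real (ball 0 1))⁻¹ * ∫ y in closedBall x ρ, f y ∂μ := by
        gcongr
    _ = _ := by rw [div_pow]; field_simp

lemma setAverage_closedBall_le_rpow_setAverage_rpow {f : E → ℝ} (hf : Continuous f) (hf₀ : 0 ≤ f)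
    (hp : 1 ≤ p) (hρ : 0 < ρ) :
    ⨍ y in closedBall x ρ, f y ∂μ ≤ (⨍ y in closedBall x ρ, f y ^ p ∂μ) ^ (1 / p) := by
  have hp₀ : 0 < p := by linarith
  have hjensen := (convexOn_rpow hp).map_set_average_le
    (Real.continuous_rpow_const hp₀.le).continuousOn isClosed_Ici
    (measure_closedBall_pos μ x hρ).ne' measure_closedBall_lt_top.ne (ae_of_all _ hf₀)
    (integrableOn_closedBall_of_continuous hf)
    (integrableOn_closedBall_of_continuous (hf.rpow_const fun _ ↦ Or.inr hp₀.le))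
  rw [one_div]
  exact (Real.le_rpow_inv_iff_of_pos (integral_nonneg hf₀)
    (integral_nonneg fun y ↦ Real.rpow_nonneg (hf₀ y) p) hp₀).2 hjensen

lemma setAverage_norm_sub_le_integral {u : E → F} (hu : ContDiff ℝ 1 u) (x : E) (hρ : 0 < ρ) :
    ⨍ y in closedBall x ρ, ‖u y - u x‖ ∂μ ≤
      ∫ t in 0..ρ, ⨍ y in closedBall x t, ‖fderiv ℝ u y‖ ∂μ := by
  have hcont : Continuous fun q : ℝ × E ↦ ‖fderiv ℝ u (x + q.1 • q.2)‖ :=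
    ((hu.continuous_fderiv one_ne_zero).comp (by fun_prop)).norm
  have hray : Continuous fun z ↦ ∫ t in 0..ρ, ‖fderiv ℝ u (x + t • z)‖ :=
    intervalIntegral.continuous_parametric_intervalIntegral_of_continuous'
      (f := fun z t ↦ ‖fderiv ℝ u (x + t • z)‖) (μ := volume)
      ((hu.continuous_fderiv one_ne_zero).comp (by fun_prop)).norm 0 ρ
  have hswap : ∫ t in 0..ρ, ∫ z in closedBall 0 1, ‖fderiv ℝ u (x + t • z)‖ ∂μ =
      ∫ z in closedBall 0 1, (∫ t in 0..ρ, ‖fderiv ℝ u (x + t • z)‖) ∂μ := by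
    refine intervalIntegral_integral_swap ?_
    rw [Measure.prod_restrict]
    exact (hcont.continuousOn.integrableOn_compact
      (isCompact_uIcc.prod (isCompact_closedBall 0 1))).mono_set
        (prod_mono_left uIoc_subset_uIcc)
  calc ⨍ y in closedBall x ρ, ‖u y - u x‖ ∂μ
      = ⨍ z in closedBall 0 1, ‖u (x + ρ • z) - u x‖ ∂μ :=
        setAverage_closedBall_eq_unitClosedBall _ x hρ
    _ ≤ ⨍ z in closedBall 0 1, (∫ t in 0..ρ, ‖fderiv ℝ u (x + t • z)‖) ∂μ := by
        refine setAverage_mono_on (integrableOn_closedBall_of_continuous ?_)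
          (integrableOn_closedBall_of_continuous hray) measurableSet_closedBall fun z hz ↦
          norm_sub_le_integral_norm_fderiv hu x hρ.le (mem_closedBall_zero_iff.1 hz)
        exact ((hu.continuous.comp (by fun_prop)).sub continuous_const).norm
    _ = ∫ t in 0..ρ, ⨍ z in closedBall 0 1, ‖fderiv ℝ u (x + t • z)‖ ∂μ := by
        simp only [setAverage_eq, smul_eq_mul, intervalIntegral.integral_const_mul, hswap]
    _ = ∫ t in 0..ρ, ⨍ y in closedBall x t, ‖fderiv ℝ u y‖ ∂μ := by
        refine intervalIntegral.integral_congr_Ioo_of_le hρ.le fun t ht ↦ ?_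
        exact (setAverage_closedBall_eq_unitClosedBall (‖fderiv ℝ u ·‖) x ht.1).symm

lemma setAverage_closedBall_le_rpow_mul {f : E → ℝ} (hf : Continuous f) (hf₀ : 0 ≤ f)
    (hp : 1 ≤ p) {t : ℝ} (ht : 0 < t) (htρ : t ≤ ρ) :
    ⨍ y in closedBall x t, f y ∂μ ≤ (ρ / t) ^ (Module.finrank ℝ E / p : ℝ) *
      (⨍ y in closedBall x ρ, f y ^ p ∂μ) ^ (1 / p) := by
  have hρ : 0 < ρ := ht.trans_le htρ
  have hfp : 0 ≤ fun y ↦ f y ^ p := fun y ↦ Real.rpow_nonneg (hf₀ y) p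
  calc ⨍ y in closedBall x t, f y ∂μ
      ≤ (⨍ y in closedBall x t, f y ^ p ∂μ) ^ (1 / p) :=
        setAverage_closedBall_le_rpow_setAverage_rpow hf hf₀ hp ht
    _ ≤ ((ρ / t) ^ Module.finrank ℝ E * ⨍ y in closedBall x ρ, f y ^ p ∂μ) ^ (1 / p) :=
        Real.rpow_le_rpow (integral_nonneg hfp) (setAverage_closedBall_le_mul
          (hf.rpow_const fun _ ↦ Or.inr (by linarith)) hfp ht htρ) (by positivity)
    _ = _ := by
        have hmean : 0 ≤ ⨍ y in closedBall x ρ, f y ^ p ∂μ := integral_nonneg hfp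
        rw [Real.mul_rpow (by positivity) hmean, ← Real.rpow_natCast_mul (by positivity),
          mul_one_div]

theorem setAverage_norm_sub_le_of_finrank_lt {u : E → F} (hu : ContDiff ℝ 1 u) (hp : 1 ≤ p)
    (hdim : Module.finrank ℝ E < p) (x : E) (hρ : 0 < ρ) :
    ⨍ y in closedBall x ρ, ‖u y - u x‖ ∂μ ≤ ρ / (1 - Module.finrank ℝ E / p) *
      (⨍ y in closedBall x ρ, ‖fderiv ℝ u y‖ ^ p ∂μ) ^ (1 / p) := by
  set s : ℝ := Module.finrank ℝ E / p
  set N := (⨍ y in closedBall x ρ, ‖fderiv ℝ u y‖ ^ p ∂μ) ^ (1 / p)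
  have hs : s < 1 := (div_lt_one (by linarith)).2 hdim
  have hint : IntervalIntegrable (fun t ↦ ρ ^ s * N * t ^ (-s)) volume 0 ρ :=
    (intervalIntegral.intervalIntegrable_rpow' (by linarith)).const_mul _
  calc ⨍ y in closedBall x ρ, ‖u y - u x‖ ∂μ
      ≤ ∫ t in 0..ρ, ⨍ y in closedBall x t, ‖fderiv ℝ u y‖ ∂μ :=
        setAverage_norm_sub_le_integral hu x hρ
    _ ≤ ∫ t in 0..ρ, ρ ^ s * N * t ^ (-s) := by
        rw [intervalIntegral.integral_of_le hρ.le, intervalIntegral.integral_of_le hρ.le]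
        refine integral_mono_of_nonneg (ae_of_all _ fun t ↦ integral_nonneg fun y ↦ norm_nonneg _)
          hint.1 (ae_restrict_of_forall_mem measurableSet_Ioc fun t ht ↦ ?_)
        refine (setAverage_closedBall_le_rpow_mul (hu.continuous_fderiv one_ne_zero).norm
          (fun y ↦ norm_nonneg _) hp ht.1 ht.2).trans_eq ?_
        simp only [Real.div_rpow hρ.le ht.1.le, Real.rpow_neg ht.1.le, s, N]
        ring
    _ = ρ / (1 - s) * N := by
        rw [intervalIntegral.integral_const_mul, integral_rpow (Or.inl (by linarith)),
          Real.zero_rpow (by linarith), sub_zero, ← sub_eq_neg_add, Real.rpow_sub hρ, Real.rpow_one]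
        field_simp

lemma norm_le_rpow_setAverage_add {u : E → F} (hu : ContDiff ℝ 1 u) (hp : 1 ≤ p)
    (hdim : Module.finrank ℝ E < p) (x : E) (hρ : 0 < ρ) :
    ‖u x‖ ≤ (⨍ y in closedBall x ρ, ‖u y‖ ^ p ∂μ) ^ (1 / p) +
      ρ / (1 - Module.finrank ℝ E / p) *
        (⨍ y in closedBall x ρ, ‖fderiv ℝ u y‖ ^ p ∂μ) ^ (1 / p) := by
  have hu_int : IntegrableOn (fun y ↦ ‖u y‖) (closedBall x ρ) μ :=
    integrableOn_closedBall_of_continuous hu.continuous.norm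
  have hsub_int : IntegrableOn (fun y ↦ ‖u y - u x‖) (closedBall x ρ) μ :=
    integrableOn_closedBall_of_continuous (hu.continuous.sub continuous_const).norm
  calc ‖u x‖ = ⨍ _ in closedBall x ρ, ‖u x‖ ∂μ :=
        (setAverage_const (measure_closedBall_pos μ x hρ).ne' measure_closedBall_lt_top.ne _).symm
    _ ≤ ⨍ y in closedBall x ρ, (‖u y‖ + ‖u y - u x‖) ∂μ :=
        setAverage_mono_on (integrableOn_closedBall_of_continuous continuous_const)
          (hu_int.add hsub_int) measurableSet_closedBall
          fun y _ ↦ norm_le_norm_add_norm_sub (u y) (u x)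
    _ = (⨍ y in closedBall x ρ, ‖u y‖ ∂μ) + ⨍ y in closedBall x ρ, ‖u y - u x‖ ∂μ := by
        simp only [setAverage_eq, integral_add hu_int hsub_int, smul_add]
    _ ≤ _ := add_le_add
        (setAverage_closedBall_le_rpow_setAverage_rpow hu.continuous.norm
          (fun _ ↦ norm_nonneg _) hp hρ)
        (setAverage_norm_sub_le_of_finrank_lt hu hp hdim x hρ)

end Morrey

section BallEnergy

lemma closedBall_subset_norm_preimage_Icc {E : Type*} [SeminormedAddCommGroup E] (x : E) (ρ : ℝ) :
    closedBall x ρ ⊆ norm ⁻¹' Icc (max (‖x‖ - ρ) 0) (‖x‖ + ρ) := fun y hy ↦ by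
  have := abs_le.1 ((abs_norm_sub_norm_le y x).trans (mem_closedBall_iff_norm.1 hy))
  exact ⟨max_le (by linarith) (norm_nonneg y), by linarith⟩

variable {E : Type*} [NormedAddCommGroup E] [NormedSpace ℝ E] [MeasurableSpace E] [BorelSpace E]
  {μ : Measure E} {u : E → ℝ} {p R c ρ : ℝ} {x : E}

lemma setAverage_hardyDensity_nonneg (hc : 0 ≤ c) (hρ : 0 ≤ ρ) (hxρ : R - ‖x‖ = 2 * ρ) :
    0 ≤ ⨍ y in closedBall x ρ, hardyDensity p (-c) (R - ‖y‖) (u y) ‖fderiv ℝ u y‖ ∂μ := by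
  rw [setAverage_eq]
  refine smul_nonneg (by positivity) (setIntegral_nonneg measurableSet_closedBall fun y hy ↦ ?_)
  exact hardyDensity_neg_nonneg hc
    (by linarith [(closedBall_subset_norm_preimage_Icc x ρ hy).2]) (norm_nonneg _)

variable [FiniteDimensional ℝ E] [μ.IsAddHaarMeasure]

lemma abs_le_mul_rpow_setAverage_hardyDensity (hp : 1 ≤ p) (hdim : Module.finrank ℝ E < p)
    (hc : 0 < c) (hu : ContDiff ℝ 1 u) (hsupp : tsupport u ⊆ ball 0 R) (hρ : 0 < ρ)
    (hxρ : R - ‖x‖ = 2 * ρ) :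
    |u x| ≤ (3 * (1 / c) ^ (1 / p) + 1 / (1 - Module.finrank ℝ E / p)) * ρ *
      (⨍ y in closedBall x ρ, hardyDensity p (-c) (R - ‖y‖) (u y) ‖fderiv ℝ u y‖ ∂μ) ^ (1 / p) := by
  have hp₀ : 0 < p := by linarith
  have hs : 0 < 1 - Module.finrank ℝ E / p := sub_pos.2 ((div_lt_one hp₀).2 hdim)
  set N := fun y ↦ hardyDensity p (-c) (R - ‖y‖) (u y) ‖fderiv ℝ u y‖
  have hdist : ∀ y ∈ closedBall x ρ, R - ‖y‖ ∈ Icc ρ (3 * ρ) := fun y hy ↦ by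
    obtain ⟨hinner, houter⟩ := closedBall_subset_norm_preimage_Icc x ρ hy
    constructor <;> linarith [le_max_left (‖x‖ - ρ) 0]
  have hN : IntegrableOn N (closedBall x ρ) μ :=
    (integrable_hardyDensity hp₀ (-c) hu hsupp).integrableOn
  have hint : ∀ {f : E → ℝ}, Continuous f → IntegrableOn (fun y ↦ f y ^ p) (closedBall x ρ) μ :=
    fun hf ↦ integrableOn_closedBall_of_continuous (hf.rpow_const fun _ ↦ Or.inr hp₀.le)
  have hval := rpow_setAverage_rpow_le_mul hp₀.le (k := (3 * ρ) ^ p / c) (by positivity)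
    measurableSet_closedBall (fun y ↦ norm_nonneg (u y)) (hint hu.continuous.norm) hN fun y hy ↦
      abs_rpow_le_mul_hardyDensity_neg hp₀.le hc (hρ.trans_le (hdist y hy).1) (hdist y hy).2
        (norm_nonneg _)
  have hgrad := rpow_setAverage_rpow_le_mul hp₀.le one_pos measurableSet_closedBall
    (fun y ↦ norm_nonneg (fderiv ℝ u y)) (hint (hu.continuous_fderiv one_ne_zero).norm) hN
    fun y hy ↦
      (rpow_le_hardyDensity_neg hc.le (hρ.le.trans (hdist y hy).1)).trans_eq (one_mul _).symm
  have hroot : ((3 * ρ) ^ p / c) ^ (1 / p) = 3 * (1 / c) ^ (1 / p) * ρ := by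
    rw [div_eq_mul_one_div, Real.mul_rpow (by positivity) (by positivity), one_div p,
      Real.rpow_rpow_inv (by positivity) hp₀.ne']
    ring
  rw [hroot] at hval
  rw [Real.one_rpow, one_mul] at hgrad
  calc |u x| ≤ _ := norm_le_rpow_setAverage_add hu hp hdim x hρ
    _ ≤ _ := add_le_add hval (mul_le_mul_of_nonneg_left hgrad (by positivity))
    _ = _ := by ring

lemma logWeight_mul_setIntegral_closedBall_hardyDensity_le [Nontrivial E] (hp : 1 < p) {D : ℝ}
    (hD : R ≤ D) (hu : ContDiff ℝ 1 u) (hsupp : tsupport u ⊆ ball 0 R) (hρ : 0 < ρ)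
    (hxρ : R - ‖x‖ = 2 * ρ) :
    logWeight ((R - ‖x‖) / D) / (24 * p) * ∫ y in closedBall x ρ,
        hardyDensity p (-((p - 1) / p) ^ (p - 1)) (R - ‖y‖) (u y) ‖fderiv ℝ u y‖ ∂μ ≤
      ∫ y in ball 0 R,
        hardyDensity p (((p - 1) / p) ^ p) (R - ‖y‖) (u y) ‖fderiv ℝ u y‖ ∂μ := by
  have hp₀ : 0 < p := by linarith
  have hD₀ : 0 < D := by linarith [norm_nonneg x]
  set N := fun y ↦ hardyDensity p (-((p - 1) / p) ^ (p - 1)) (R - ‖y‖) (u y) ‖fderiv ℝ u y‖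
  set a := max (‖x‖ - ρ) 0
  have ha : 0 ≤ a := le_max_right _ _
  have hax : a ≤ ‖x‖ := max_le (by linarith) (norm_nonneg x)
  have hRab : R - a ≤ 3 * (R - (‖x‖ + ρ)) := by linarith [le_max_left (‖x‖ - ρ) 0]
  have haD : (R - a) / D ≤ 1 := (div_le_one hD₀).2 (by linarith)
  have hweight₀ : 0 ≤ logWeight ((R - a) / D) :=
    (logWeight_sub_div_mem_Ioc ha (by linarith) hD).1.le
  have hweight : logWeight ((R - ‖x‖) / D) ≤ logWeight ((R - a) / D) :=
    logWeight_le_logWeight (div_pos (by linarith) hD₀) (by gcongr) haD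
  have hA : MeasurableSet (norm ⁻¹' Icc a (‖x‖ + ρ) : Set E) := measurable_norm measurableSet_Icc
  have hN₀ : ∀ y ∈ norm ⁻¹' Icc a (‖x‖ + ρ), 0 ≤ N y := fun y hy ↦
    hardyDensity_neg_nonneg (sub_one_div_rpow_pos hp _).le
      (by linarith [hy.2]) (norm_nonneg _)
  have hball₀ : 0 ≤ ∫ y in closedBall x ρ, N y ∂μ := setIntegral_nonneg measurableSet_closedBall
    fun y hy ↦ hN₀ y (closedBall_subset_norm_preimage_Icc x ρ hy)
  have hball : ∫ y in closedBall x ρ, N y ∂μ ≤ ∫ y in norm ⁻¹' Icc a (‖x‖ + ρ), N y ∂μ :=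
    setIntegral_mono_set (integrable_hardyDensity hp₀ _ hu hsupp).integrableOn
      (ae_restrict_of_forall_mem hA hN₀) (closedBall_subset_norm_preimage_Icc x ρ).eventuallyLE
  calc _ ≤ logWeight ((R - a) / D) / (24 * p) * ∫ y in norm ⁻¹' Icc a (‖x‖ + ρ), N y ∂μ := by
        gcongr
    _ ≤ _ := logWeight_mul_setIntegral_hardyDensity_le hp ha (by linarith) (by linarith) hD hRab
        hu hsupp

lemma logWeight_mul_setAverage_hardyDensity_le [Nontrivial E] (hp : 1 < p) {D : ℝ} (hD : R ≤ D)
    (hu : ContDiff ℝ 1 u) (hsupp : tsupport u ⊆ ball 0 R) (hρ : 0 < ρ) (hxρ : R - ‖x‖ = 2 * ρ) :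
    logWeight ((R - ‖x‖) / D) * ⨍ y in closedBall x ρ,
        hardyDensity p (-((p - 1) / p) ^ (p - 1)) (R - ‖y‖) (u y) ‖fderiv ℝ u y‖ ∂μ ≤
      (ρ ^ Module.finrank ℝ E)⁻¹ * (24 * p / μ.real (ball 0 1)) * ∫ y in ball 0 R,
        hardyDensity p (((p - 1) / p) ^ p) (R - ‖y‖) (u y) ‖fderiv ℝ u y‖ ∂μ := by
  have hball := logWeight_mul_setIntegral_closedBall_hardyDensity_le (μ := μ) hp hD hu hsupp hρ hxρ
  rw [setAverage_eq, Measure.addHaar_real_closedBall μ x hρ.le, smul_eq_mul]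
  refine le_trans (le_of_eq ?_) (mul_le_mul_of_nonneg_left hball (by positivity))
  field_simp

lemma rpow_logWeight_mul_rpow_setAverage_hardyDensity_le [Nontrivial E] (hp : 1 < p) {D : ℝ}
    (hD : R ≤ D) (hu : ContDiff ℝ 1 u) (hsupp : tsupport u ⊆ ball 0 R) (hρ : 0 < ρ)
    (hxρ : R - ‖x‖ = 2 * ρ) :
    logWeight ((R - ‖x‖) / D) ^ (1 / p) * (⨍ y in closedBall x ρ,
        hardyDensity p (-((p - 1) / p) ^ (p - 1)) (R - ‖y‖) (u y) ‖fderiv ℝ u y‖ ∂μ) ^ (1 / p) ≤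
      ρ ^ (-(Module.finrank ℝ E / p) : ℝ) * (24 * p / μ.real (ball 0 1)) ^ (1 / p) *
        (∫ y in ball 0 R,
          hardyDensity p (((p - 1) / p) ^ p) (R - ‖y‖) (u y) ‖fderiv ℝ u y‖ ∂μ) ^ (1 / p) := by
  have : 0 < p := by linarith
  have : 0 < μ.real (ball 0 1) := measureReal_ball_pos one_pos
  have hX := (logWeight_sub_div_mem_Ioc (norm_nonneg x) (by linarith) hD).1.le
  have hmean := setAverage_hardyDensity_nonneg (p := p) (u := u) (μ := μ)
    (sub_one_div_rpow_pos hp (p - 1)).le hρ.le hxρ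
  have henergy := logWeight_mul_setAverage_hardyDensity_le (μ := μ) hp hD hu hsupp hρ hxρ
  rw [← Real.mul_rpow hX hmean]
  refine (Real.rpow_le_rpow (mul_nonneg hX hmean) henergy (by positivity)).trans_eq ?_
  rw [Real.mul_rpow (by positivity)
      (nonneg_of_mul_nonneg_right ((mul_nonneg hX hmean).trans henergy) (by positivity)),
    Real.mul_rpow (by positivity) (by positivity), Real.inv_rpow (by positivity),
    ← Real.rpow_natCast_mul hρ.le, mul_one_div, ← Real.rpow_neg hρ.le]

theorem hardy_morrey_pointwise_ball_boundary_general [Nontrivial E]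
    (hp : Module.finrank ℝ E < p) :
    ∃ C : ℝ, 0 < C ∧ ∀ R : ℝ, ∀ u : E → ℝ, ContDiff ℝ 1 u → tsupport u ⊆ ball 0 R →
      ∀ D : ℝ, R ≤ D → ∀ x ∈ ball (0 : E) R,
        |u x| * (R - ‖x‖) ^ ((Module.finrank ℝ E : ℝ) / p - 1) *
            ((1 - Real.log ((R - ‖x‖) / D))⁻¹) ^ (1 / p) ≤
          C * ((∫ y in ball 0 R, ‖fderiv ℝ u y‖ ^ p ∂μ) -
            ((p - 1) / p) ^ p * ∫ y in ball 0 R, |u y| ^ p / (R - ‖y‖) ^ p ∂μ) ^ (1 / p) := by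
  have hn : (1 : ℝ) ≤ Module.finrank ℝ E := mod_cast Module.finrank_pos
  have hp₁ : 1 < p := hn.trans_lt hp
  have hp₀ : 0 < p := by linarith
  have hh := sub_one_div_rpow_pos hp₁ (p - 1)
  set s : ℝ := Module.finrank ℝ E / p
  have hs : 0 < 1 - s := sub_pos.2 ((div_lt_one hp₀).2 hp)
  have : 0 < μ.real (ball 0 1) := measureReal_ball_pos one_pos
  refine ⟨(3 * (1 / ((p - 1) / p) ^ (p - 1)) ^ (1 / p) + 1 / (1 - s)) * 2 ^ (s - 1) *
    (24 * p / μ.real (ball 0 1)) ^ (1 / p), by positivity, fun R u hu hsupp D hD x hx ↦ ?_⟩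
  obtain ⟨ρ, hxρ⟩ : ∃ ρ, R - ‖x‖ = 2 * ρ := ⟨(R - ‖x‖) / 2, by ring⟩
  have hρ : 0 < ρ := by linarith [mem_ball_zero_iff.1 hx]
  have hX : 0 ≤ (1 - Real.log ((R - ‖x‖) / D))⁻¹ :=
    (logWeight_sub_div_mem_Ioc (norm_nonneg x) (mem_ball_zero_iff.1 hx).le hD).1.le
  have hlocal := abs_le_mul_rpow_setAverage_hardyDensity (μ := μ) hp₁.le hp hh hu hsupp hρ hxρ
  have henergy :=
    rpow_logWeight_mul_rpow_setAverage_hardyDensity_le (μ := μ) hp₁ hD hu hsupp hρ hxρ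
  rw [setIntegral_hardyDensity_eq_sub hp₀ _ hu hsupp] at henergy
  have hscale : ρ * (R - ‖x‖) ^ (s - 1) * ρ ^ (-s) = 2 ^ (s - 1) := by
    rw [hxρ, Real.mul_rpow zero_le_two hρ.le, Real.rpow_sub_one hρ.ne', Real.rpow_neg hρ.le]
    field_simp
  have hδ : 0 ≤ R - ‖x‖ := by linarith
  set M := 3 * (1 / ((p - 1) / p) ^ (p - 1)) ^ (1 / p) + 1 / (1 - s)
  calc _ ≤ M * ρ * _ * (R - ‖x‖) ^ (s - 1) * ((1 - Real.log ((R - ‖x‖) / D))⁻¹) ^ (1 / p) := by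
        gcongr
    _ = M * (ρ * (R - ‖x‖) ^ (s - 1)) * (logWeight ((R - ‖x‖) / D) ^ (1 / p) * _) := by
        rw [logWeight]; ring
    _ ≤ M * (ρ * (R - ‖x‖) ^ (s - 1)) * _ :=
        mul_le_mul_of_nonneg_left henergy (by positivity)
    _ = _ := by rw [← hscale]; ring

end BallEnergy

/-- pointwise Hardy–Morrey estimate on a ball, distance to the boundary. -/
theorem hardy_morrey_pointwise_ball_boundary (n : ℕ) (hn : 2 ≤ n) (p : ℝ)
    (hp : (n : ℝ) < p) :
    ∃ Θ C : ℝ, 0 ≤ Θ ∧ 0 < C ∧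
      ∀ R : ℝ, 0 < R →
      ∀ u : EuclideanSpace ℝ (Fin n) → ℝ, ContDiff ℝ (⊤ : ℕ∞) u → HasCompactSupport u →
        tsupport u ⊆ Metric.ball (0 : EuclideanSpace ℝ (Fin n)) R →
        ∀ D : ℝ, Real.exp Θ * R ≤ D →
        ∀ x ∈ Metric.ball (0 : EuclideanSpace ℝ (Fin n)) R,
          |u x| * (R - ‖x‖) ^ ((n : ℝ) / p - 1) *
              ((1 - Real.log ((R - ‖x‖) / D))⁻¹) ^ (1 / p) ≤
            C * ((∫ y in Metric.ball (0 : EuclideanSpace ℝ (Fin n)) R, ‖fderiv ℝ u y‖ ^ p)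
              - ((p - 1) / p) ^ p *
                  ∫ y in Metric.ball (0 : EuclideanSpace ℝ (Fin n)) R,
                    |u y| ^ p / (R - ‖y‖) ^ p) ^ (1 / p) := by
  have : Nontrivial (EuclideanSpace ℝ (Fin n)) :=
    Module.nontrivial_of_finrank_pos (R := ℝ) (by rw [finrank_euclideanSpace_fin]; lia)
  obtain ⟨C, hC, hbound⟩ := hardy_morrey_pointwise_ball_boundary_general
    (E := EuclideanSpace ℝ (Fin n)) (μ := volume) (p := p) (by rwa [finrank_euclideanSpace_fin])
  rw [finrank_euclideanSpace_fin] at hbound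
  refine ⟨0, C, le_rfl, hC, fun R _ u hu _ hsupp D hD ↦ ?_⟩
  rw [Real.exp_zero, one_mul] at hD
  exact hbound R u (hu.of_le (mod_cast le_top)) hsupp D hD
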